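/- Let (𝒜,c) be a trigonometric ∨-system in V = ℂ^N, W ⊆ V* a linear subspace, B = 𝒜 ∩ W a subsystem with span(B) = W, M(v) = Σ_{β∈B} c_β β(v) β^∨, and W^∨ = span{β^∨ : β ∈ B}. Suppose B is non-isotropic. If v ∈ W^∨ satisfies M(v) = λ v for some λ ∈ ℂ, then G_B(u,v) = λ·G_𝒜(u,v) for all u ∈ V. Moreover, every eigenvalue of the restriction of M to W^∨ is nonzero. -/

import Mathlib

open scoped Classical
open Finset

noncomputable section

/-- Evaluation of a covector `α` on a vector `x` in `ℂ^N`. -/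
def ev {N : ℕ} (α x : Fin N → ℂ) : ℂ := ∑ i, α i * x i

/-- The bilinear form `G_𝒜` associated to a configuration. -/
def Gform {N : ℕ} (A : Finset (Fin N → ℂ)) (c : (Fin N → ℂ) → ℂ)
    (u v : Fin N → ℂ) : ℂ :=
  ∑ α ∈ A, c α * ev α u * ev α v

/-- `(α ∧ β)(a, b) = α(a)β(b) - α(b)β(a)`. -/
def wedge {N : ℕ} (α β a b : Fin N → ℂ) : ℂ :=
  ev α a * ev β b - ev α b * ev β a

/-- Non-degeneracy of `G_𝒜`. -/
def Nondeg {N : ℕ} (A : Finset (Fin N → ℂ)) (c : (Fin N → ℂ) → ℂ) : Prop :=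
  ∀ u : Fin N → ℂ, (∀ v : Fin N → ℂ, Gform A c u v = 0) → u = 0

/-- `dual` assigns to each covector `γ ∈ 𝒜` its `G_𝒜`-dual vector `γ^∨`. -/
def IsDual {N : ℕ} (A : Finset (Fin N → ℂ)) (c : (Fin N → ℂ) → ℂ)
    (dual : (Fin N → ℂ) → Fin N → ℂ) : Prop :=
  ∀ γ ∈ A, ∀ v : Fin N → ℂ, Gform A c (dual γ) v = ev γ v

/-- `γ` is proportional to `α`. -/
def Collin {N : ℕ} (α γ : Fin N → ℂ) : Prop := ∃ t : ℂ, γ = t • α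

/-- `γ₁ ∼ γ₂` iff `γ₁ + γ₂` or `γ₁ - γ₂` is an integer multiple of `α`. -/
def SeriesRel {N : ℕ} (α γ₁ γ₂ : Fin N → ℂ) : Prop :=
  ∃ m : ℤ, γ₁ + γ₂ = (m : ℂ) • α ∨ γ₁ - γ₂ = (m : ℂ) • α

/-- `Γ` is an (maximal) `α`-series of the configuration `A`. -/
def IsSeries {N : ℕ} (A : Finset (Fin N → ℂ)) (α : Fin N → ℂ)
    (Γ : Finset (Fin N → ℂ)) : Prop :=
  Γ.Nonempty ∧ (∀ γ ∈ Γ, γ ∈ A ∧ ¬ Collin α γ) ∧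
    (∀ γ₁ ∈ Γ, ∀ γ₂ ∈ Γ, SeriesRel α γ₁ γ₂) ∧
    (∀ β ∈ A, ¬ Collin α β → (∃ γ ∈ Γ, SeriesRel α β γ) → β ∈ Γ)

/-- The trigonometric ∨-conditions. -/
def IsTrigVSystem {N : ℕ} (A : Finset (Fin N → ℂ)) (c : (Fin N → ℂ) → ℂ)
    (dual : (Fin N → ℂ) → Fin N → ℂ) : Prop :=
  ∀ α ∈ A, ∀ Γ : Finset (Fin N → ℂ), IsSeries A α Γ →
    ∀ a b : Fin N → ℂ, ∑ β ∈ Γ, c β * ev α (dual β) * wedge α β a b = 0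

/-- The form `G^{(1)}_𝒜` evaluated at `(u, v)`. -/
def G1form {N : ℕ} (A : Finset (Fin N → ℂ)) (c : (Fin N → ℂ) → ℂ)
    (u v : Fin N → ℂ) : ℂ :=
  ∑ α ∈ A, ∑ β ∈ A, c α * c β * wedge α β u v ^ 2

/-- The form `G^{(2)}_𝒜` evaluated at `(u, v)`. -/
def G2form {N : ℕ} (A : Finset (Fin N → ℂ)) (c : (Fin N → ℂ) → ℂ)
    (dual : (Fin N → ℂ) → Fin N → ℂ) (u v : Fin N → ℂ) : ℂ :=
  ∑ α ∈ A, ∑ β ∈ A,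
    c α * c β * Gform A c (dual α) (dual β) * wedge α β u v ^ 2

/-- Complex cotangent. -/
def ccot (z : ℂ) : ℂ := Complex.cos z / Complex.sin z

/-- The matrix `F_i(x)` of third derivatives of the prepotential, `1 ≤ i ≤ N`. -/
def Fmat {N : ℕ} (A : Finset (Fin N → ℂ)) (c : (Fin N → ℂ) → ℂ) (lam : ℂ)
    (i : Fin N) (x : Fin N → ℂ) : Matrix (Fin N ⊕ Unit) (Fin N ⊕ Unit) ℂ :=
  Matrix.of fun p q =>
    match p, q with
    | Sum.inl p, Sum.inl q => lam * ∑ α ∈ A, c α * α i * α p * α q * ccot (ev α x)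
    | Sum.inl p, Sum.inr _ => 2 * ∑ α ∈ A, c α * α i * α p
    | Sum.inr _, Sum.inl q => 2 * ∑ α ∈ A, c α * α i * α q
    | Sum.inr _, Sum.inr _ => 0

/-- The constant matrix `F_{N+1}`. -/
def Flast {N : ℕ} (A : Finset (Fin N → ℂ)) (c : (Fin N → ℂ) → ℂ) :
    Matrix (Fin N ⊕ Unit) (Fin N ⊕ Unit) ℂ :=
  Matrix.of fun p q =>
    match p, q with
    | Sum.inl p, Sum.inl q => 2 * ∑ α ∈ A, c α * α p * α q
    | Sum.inr _, Sum.inr _ => 2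
    | _, _ => 0

/-- `(𝒜, c, λ)` satisfies the trigonometric WDVV equations. -/
def SatisfiesWDVV {N : ℕ} (A : Finset (Fin N → ℂ)) (c : (Fin N → ℂ) → ℂ)
    (lam : ℂ) : Prop :=
  IsUnit (Flast A c) ∧
    ∀ x : Fin N → ℂ, (∀ α ∈ A, Complex.sin (ev α x) ≠ 0) →
      ∀ i j : Fin N,
        Fmat A c lam i x * (Flast A c)⁻¹ * Fmat A c lam j x =
          Fmat A c lam j x * (Flast A c)⁻¹ * Fmat A c lam i x

/-- The covectors of `𝒜` lie in a lattice of full rank `N` in `(ℂ^N)^*`. -/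
def InLattice {N : ℕ} (A : Finset (Fin N → ℂ)) : Prop :=
  ∃ L : Fin N → Fin N → ℂ, LinearIndependent ℂ L ∧
    ∀ α ∈ A, ∃ m : Fin N → ℤ, α = ∑ i, (m i : ℂ) • L i

/-- No two covectors of `𝒜` are negatively proportional. -/
def PositiveSystem {N : ℕ} (A : Finset (Fin N → ℂ)) : Prop :=
  ∀ α ∈ A, ∀ t : ℝ, t < 0 → (t : ℂ) • α ∉ A

/-- The operator `M(v) = Σ_{β ∈ B} c_β β(v) β^∨`. -/
def Mop {N : ℕ} (B : Finset (Fin N → ℂ)) (c : (Fin N → ℂ) → ℂ)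
    (dual : (Fin N → ℂ) → Fin N → ℂ) (v : Fin N → ℂ) : Fin N → ℂ :=
  ∑ β ∈ B, (c β * ev β v) • dual β

/-- `W^∨ = span{β^∨ : β ∈ B}`. -/
def Wdual {N : ℕ} (B : Finset (Fin N → ℂ))
    (dual : (Fin N → ℂ) → Fin N → ℂ) : Submodule ℂ (Fin N → ℂ) :=
  Submodule.span ℂ (dual '' (B : Set (Fin N → ℂ)))

/-- `B` is non-isotropic: the restriction of `G_B` to `W^∨` is non-degenerate. -/
def NonIsotropic {N : ℕ} (B : Finset (Fin N → ℂ)) (c : (Fin N → ℂ) → ℂ)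
    (dual : (Fin N → ℂ) → Fin N → ℂ) : Prop :=
  ∀ u ∈ Wdual B dual, (∀ v ∈ Wdual B dual, Gform B c u v = 0) → u = 0

/-!
The operator `M` represents `G_B` with respect to `G_𝒜`: the defining property of the vectors `β^∨`
gives `G_𝒜(M v, ·) = G_B(v, ·)`. An eigenvector `v` of `M` thus satisfies
`G_B(v, ·) = λ G_𝒜(v, ·)`, and `λ = 0` would place it in the radical of `G_B` on `W^∨`.
-/

section CovectorForm

variable {ι R V : Type*} [CommSemiring R] [AddCommMonoid V] [Module R V]

/-- The symmetric bilinear form `∑ i ∈ s, c i • α i ⊗ α i` of a finite family of covectors `α` with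
multiplicities `c`; it plays the role of `G_B`. -/
def covectorForm (s : Finset ι) (c : ι → R) (α : ι → Module.Dual R V) : LinearMap.BilinForm R V :=
  ∑ i ∈ s, c i • LinearMap.BilinForm.linMulLin (α i) (α i)

/-- The operator `v ↦ ∑ i ∈ s, c i • α i v • d i`, which is `M` when `d i` is the vector dual
to `α i`. -/
def covectorOperator (s : Finset ι) (c : ι → R) (α : ι → Module.Dual R V) (d : ι → V) :
    Module.End R V :=
  ∑ i ∈ s, c i • (α i).smulRight (d i)

variable {s : Finset ι} {c : ι → R} {α : ι → Module.Dual R V} {d : ι → V}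
  {G : LinearMap.BilinForm R V}

lemma bilin_covectorOperator (hd : ∀ i ∈ s, G (d i) = α i) (v : V) :
    G (covectorOperator s c α d v) = covectorForm s c α v := by
  ext u
  simp only [covectorOperator, covectorForm, LinearMap.sum_apply, LinearMap.smul_apply,
    LinearMap.smulRight_apply, map_sum, map_smul, LinearMap.BilinForm.linMulLin_apply]
  exact sum_congr rfl fun i hi ↦ by rw [hd i hi, smul_eq_mul (α i v)]

theorem subsystem_eigenvalue_properties_general {W : Submodule R V} {v : V} {μ : R}
    (hd : ∀ i ∈ s, G (d i) = α i) (hW : ((covectorForm s c α).restrict W).SeparatingLeft)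
    (hv : v ∈ W) (hM : covectorOperator s c α d v = μ • v) :
    covectorForm s c α v = μ • G v ∧ (v ≠ 0 → μ ≠ 0) := by
  have hform : covectorForm s c α v = μ • G v := by
    rw [← bilin_covectorOperator hd, hM, map_smul]
  refine ⟨hform, fun hv0 hμ ↦ hv0 ?_⟩
  have hrad (w : W) : (covectorForm s c α).restrict W ⟨v, hv⟩ w = 0 := by
    simp [hform, hμ]
  exact congrArg Subtype.val (hW ⟨v, hv⟩ hrad)

end CovectorForm

section Configuration

variable {N : ℕ} (A B : Finset (Fin N → ℂ)) (c : (Fin N → ℂ) → ℂ)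
  (dual : (Fin N → ℂ) → Fin N → ℂ)

lemma Gform_comm (u v : Fin N → ℂ) : Gform A c u v = Gform A c v u :=
  sum_congr rfl fun _ _ ↦ mul_right_comm _ _ _

lemma covectorForm_dotProduct (u v : Fin N → ℂ) :
    covectorForm A c (dotProductBilin ℂ ℂ) u v = Gform A c u v := by
  simp [covectorForm, Gform, ev, dotProduct, mul_assoc]

lemma covectorOperator_dotProduct (v : Fin N → ℂ) :
    covectorOperator B c (dotProductBilin ℂ ℂ) dual v = Mop B c dual v := by
  simp [covectorOperator, Mop, ev, dotProduct, mul_smul]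

variable {A B c dual}

lemma IsDual.covectorForm_dual (hdual : IsDual A c dual) {γ : Fin N → ℂ} (hγ : γ ∈ A) :
    covectorForm A c (dotProductBilin ℂ ℂ) (dual γ) = dotProductBilin ℂ ℂ γ :=
  LinearMap.ext fun v ↦ (covectorForm_dotProduct A c (dual γ) v).trans (hdual γ hγ v)

lemma NonIsotropic.separatingLeft_restrict (hiso : NonIsotropic B c dual) :
    ((covectorForm B c (dotProductBilin ℂ ℂ)).restrict (Wdual B dual)).SeparatingLeft :=
  fun u hu ↦ Subtype.ext <| hiso u u.2 fun v hv ↦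
    (covectorForm_dotProduct B c u v).symm.trans (hu ⟨v, hv⟩)

end Configuration

/-- for a non-isotropic subsystem, eigenvectors of `M` in `W^∨` satisfy
`G_B(u,v) = λ·G_𝒜(u,v)`, and all eigenvalues of `M|_{W^∨}` are nonzero. -/
theorem subsystem_eigenvalue_properties {N : ℕ}
    (A : Finset (Fin N → ℂ)) (c : (Fin N → ℂ) → ℂ)
    (dual : (Fin N → ℂ) → Fin N → ℂ)
    (hA0 : ∀ α ∈ A, α ≠ (0 : Fin N → ℂ))
    (hnd : Nondeg A c)
    (hdual : IsDual A c dual)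
    (hvsys : IsTrigVSystem A c dual)
    (W : Submodule ℂ (Fin N → ℂ)) (B : Finset (Fin N → ℂ))
    (hB : ∀ α : Fin N → ℂ, α ∈ B ↔ α ∈ A ∧ α ∈ W)
    (hWspan : W = Submodule.span ℂ (B : Set (Fin N → ℂ)))
    (hiso : NonIsotropic B c dual) :
    ∀ v ∈ Wdual B dual, ∀ μ : ℂ, Mop B c dual v = μ • v →
      (∀ u : Fin N → ℂ, Gform B c u v = μ * Gform A c u v) ∧ (v ≠ 0 → μ ≠ 0) := by
  intro v hv μ hM
  obtain ⟨hform, hμ⟩ := subsystem_eigenvalue_properties_general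
    (fun β hβ ↦ hdual.covectorForm_dual ((hB β).1 hβ).1) hiso.separatingLeft_restrict hv
    ((covectorOperator_dotProduct B c dual v).trans hM)
  refine ⟨fun u ↦ ?_, hμ⟩
  simpa only [LinearMap.smul_apply, smul_eq_mul, covectorForm_dotProduct, Gform_comm _ c v u]
    using LinearMap.congr_fun hform u

end
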